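/- Let q > 0 be real with q ≠ 1 and let s be a half-integer with 2s ≥ 2. Then ξ₀ + ξ₁ = q^{2s²−4s}(q^{4s} − 1) is nonzero, and the triple α = ξ₀ + ξ₁, β = (ξ₀ + ξ₁)⁻¹, γ = ξ₀ ξ₁ satisfies the three equations −α + (ξ_k ξ_{k'} − θ₂² ξ₂⁻² ξ_k⁻¹ ξ_{k'}⁻¹)·β + (ξ_k⁻¹ + ξ_{k'}⁻¹)·γ = 0 for (k,k') = (0,0), (0,1), (1,1). (This is the solution of system (abg′) for n = 2 found in the proof of Lemma 3(ii), using θ₂² = ξ₀²ξ₁²ξ₂².) -/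

import Mathlib

/-!
Since `ρ(3s-2) - 3ρ(s)` is the sum of the exponents of `ξ₀, ξ₁, ξ₂`, one has `θ₂ = -ξ₀ξ₁ξ₂`, so that
`θ₂² ξ₂⁻² = ξ₀²ξ₁²`. The three equations thereby become rational identities in `ξ₀` and `ξ₁`, valid
whenever `ξ₀`, `ξ₁` and `ξ₀ + ξ₁` are nonzero. Finally `ξ₀ + ξ₁ = q^{2s²-4s}(q^{4s} - 1)` vanishes only
if `q = 1` or `s = 0`.
-/

noncomputable def ρ (t : ℝ) : ℝ := t * (t + 1)

/-- `ξ_k = (−1)^k q^{ρ(2s−k) − 2ρ(s)}` (real powers of `q`). -/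
noncomputable def ξ (q s : ℝ) (k : ℕ) : ℝ := (-1 : ℝ) ^ k * q ^ (ρ (2 * s - k) - 2 * ρ s)

/-- `θ_n = (−1)^n q^{ρ(3s−n) − 3ρ(s)}` (real powers of `q`). -/
noncomputable def θq (q s : ℝ) (n : ℕ) : ℝ := (-1 : ℝ) ^ n * q ^ (ρ (3 * s - n) - 3 * ρ s)

theorem xi_zero (q s : ℝ) : ξ q s 0 = q ^ (2 * s ^ 2) := by
  simp only [ξ, ρ, pow_zero, one_mul]
  congr 1
  push_cast
  ring

theorem xi_one (q s : ℝ) : ξ q s 1 = -q ^ (2 * s ^ 2 - 4 * s) := by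
  simp only [ξ, ρ, pow_one, neg_one_mul]
  congr 2
  push_cast
  ring

theorem xi_ne_zero {q : ℝ} (hq : 0 < q) (s : ℝ) (k : ℕ) : ξ q s k ≠ 0 :=
  mul_ne_zero (pow_ne_zero _ (by norm_num)) (Real.rpow_pos_of_pos hq _).ne'

theorem theta_two {q : ℝ} (hq : 0 < q) (s : ℝ) :
    θq q s 2 = -(ξ q s 0 * ξ q s 1 * ξ q s 2) := by
  have h : ρ (3 * s - (2 : ℕ)) - 3 * ρ s =
      (ρ (2 * s - (0 : ℕ)) - 2 * ρ s) + (ρ (2 * s - (1 : ℕ)) - 2 * ρ s) +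
        (ρ (2 * s - (2 : ℕ)) - 2 * ρ s) := by
    simp only [ρ]
    push_cast
    ring
  simp only [θq, ξ]
  rw [h, Real.rpow_add hq, Real.rpow_add hq]
  ring

theorem theta_two_sq {q : ℝ} (hq : 0 < q) (s : ℝ) :
    θq q s 2 ^ 2 * (ξ q s 2)⁻¹ ^ 2 = ξ q s 0 ^ 2 * ξ q s 1 ^ 2 := by
  have h2 := xi_ne_zero hq s 2
  rw [theta_two hq]
  field_simp

theorem xi_zero_add_xi_one {q : ℝ} (hq : 0 < q) (s : ℝ) :
    ξ q s 0 + ξ q s 1 = q ^ (2 * s ^ 2 - 4 * s) * (q ^ (4 * s) - 1) := by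
  rw [xi_zero, xi_one, mul_sub, ← Real.rpow_add hq, sub_add_cancel]
  ring

theorem xi_zero_add_xi_one_ne_zero {q s : ℝ} (hq : 0 < q) (hq1 : q ≠ 1) (hs : s ≠ 0) :
    ξ q s 0 + ξ q s 1 ≠ 0 := by
  rw [xi_zero_add_xi_one hq]
  refine mul_ne_zero (Real.rpow_pos_of_pos hq _).ne' (sub_ne_zero.2 fun h => ?_)
  have hlog : 4 * s * Real.log q = 0 := by rw [← Real.log_rpow hq, h, Real.log_one]
  exact mul_ne_zero (mul_ne_zero four_ne_zero hs) (Real.log_ne_zero_of_pos_of_ne_one hq hq1) hlog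

/-- For `q > 0`, `q ≠ 1`, `2s ≥ 2`: `ξ₀ + ξ₁ = q^{2s²−4s}(q^{4s} − 1) ≠ 0`, and
`α = ξ₀+ξ₁`, `β = (ξ₀+ξ₁)⁻¹`, `γ = ξ₀ξ₁` solve the system (abg′) for `n = 2`. -/
theorem stmt12 (q s : ℝ) (hq : 0 < q) (hq1 : q ≠ 1)
    (hs : ∃ m : ℕ, 0 < m ∧ (m : ℝ) = 2 * s) (hs2 : 2 ≤ 2 * s) :
    let α : ℝ := ξ q s 0 + ξ q s 1
    let β : ℝ := (ξ q s 0 + ξ q s 1)⁻¹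
    let γ : ℝ := ξ q s 0 * ξ q s 1
    ξ q s 0 + ξ q s 1 = q ^ (2 * s ^ 2 - 4 * s) * (q ^ (4 * s) - 1) ∧
    ξ q s 0 + ξ q s 1 ≠ 0 ∧
    (-α + (ξ q s 0 * ξ q s 0 -
        θq q s 2 ^ 2 * (ξ q s 2)⁻¹ ^ 2 * (ξ q s 0)⁻¹ * (ξ q s 0)⁻¹) * β +
      ((ξ q s 0)⁻¹ + (ξ q s 0)⁻¹) * γ = 0) ∧
    (-α + (ξ q s 0 * ξ q s 1 -
        θq q s 2 ^ 2 * (ξ q s 2)⁻¹ ^ 2 * (ξ q s 0)⁻¹ * (ξ q s 1)⁻¹) * β +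
      ((ξ q s 0)⁻¹ + (ξ q s 1)⁻¹) * γ = 0) ∧
    (-α + (ξ q s 1 * ξ q s 1 -
        θq q s 2 ^ 2 * (ξ q s 2)⁻¹ ^ 2 * (ξ q s 1)⁻¹ * (ξ q s 1)⁻¹) * β +
      ((ξ q s 1)⁻¹ + (ξ q s 1)⁻¹) * γ = 0) := by
  intro α β γ
  have h0 := xi_ne_zero hq s 0
  have h1 := xi_ne_zero hq s 1
  have hsum : ξ q s 0 + ξ q s 1 ≠ 0 := xi_zero_add_xi_one_ne_zero hq hq1 (by linarith)
  refine ⟨xi_zero_add_xi_one hq s, hsum, ?_⟩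
  simp only [α, β, γ, theta_two_sq hq]
  generalize ξ q s 0 = a at *
  generalize ξ q s 1 = b at *
  refine ⟨?_, ?_, ?_⟩ <;> field_simp <;> ring
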